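/- Let c ≥ 1 be a real number, let n ≥ 1, and let s be a finite set with |s| = n. Then Σ_{P partition of s} c^{|P|} · (Σ_{k=1}^{|P|} k^{|P|-1}) ≤ n! · e^{2n+1} · c^n, where the outer sum runs over all partitions P of s and |P| is the number of blocks of P. -/

import Mathlib

/-!
For `m = |P|` the inner sum is at most `m · m ^ (m - 1) = m ^ m ≤ m! e ^ m ≤ m! e ^ n`, so after
bounding `c ^ m` by `c ^ n` it remains to bound `∑ P, |P|!`, the number of ordered set partitions
of `s`. Labelling the blocks of `P` injectively by `Fin n` can be done in at least `|P|!` ways, and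
a partition together with such a labelling is determined by the function `s → Fin n` sending an
element to the label of its block. Hence `∑ P, |P|! ≤ n ^ n ≤ n! e ^ n`, which gives the bound
`n! e ^ (2 n) c ^ n`, slightly better than required.
-/

open Finset Nat

/-- The function sending an element of `s` to the label of its block, for a partition of `s` whose
blocks are labelled injectively by `β`. -/
def blockLabel {α β : Type*} [DecidableEq α] {s : Finset α}
    (p : Σ P : Finpartition s, {t // t ∈ P.parts} ↪ β) (x : s) : β :=
  p.2 ⟨p.1.part x, p.1.part_mem.2 x.2⟩

/-- The label function determines the partition, whose blocks are its nonempty fibres, and then the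
labelling, whose value at a block is read off at any point of the block. -/
theorem blockLabel_injective {α β : Type*} [DecidableEq α] {s : Finset α} :
    Function.Injective (blockLabel (s := s) (β := β)) := by
  rintro ⟨P, e⟩ ⟨Q, g⟩ h
  have key : ∀ x (hx : x ∈ s), e ⟨P.part x, P.part_mem.2 hx⟩ = g ⟨Q.part x, Q.part_mem.2 hx⟩ :=
    fun x hx => congrFun h ⟨x, hx⟩
  have hiff : ∀ x ∈ s, ∀ y ∈ s, (P.part x = P.part y ↔ Q.part x = Q.part y) := by
    intro x hx y hy
    have h1 := e.injective.eq_iff (a := ⟨P.part x, P.part_mem.2 hx⟩)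
      (b := ⟨P.part y, P.part_mem.2 hy⟩)
    have h2 := g.injective.eq_iff (a := ⟨Q.part x, Q.part_mem.2 hx⟩)
      (b := ⟨Q.part y, Q.part_mem.2 hy⟩)
    rw [key x hx, key y hy] at h1
    simp only [Subtype.mk.injEq] at h1 h2
    exact h1.symm.trans h2
  have hpart : ∀ x ∈ s, P.part x = Q.part x := by
    intro x hx
    ext y
    by_cases hy : y ∈ s
    · rw [P.mem_part_iff_part_eq_part hy hx, Q.mem_part_iff_part_eq_part hy hx]
      exact hiff y hy x hx
    · exact iff_of_false (fun h => hy (P.part_subset x h)) (fun h => hy (Q.part_subset x h))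
  have hPQ : P = Q := by
    ext t
    constructor
    · intro ht
      obtain ⟨x, hx⟩ := P.nonempty_of_mem_parts ht
      have hs := P.subset ht hx
      rw [← P.part_eq_of_mem ht hx, hpart x hs]
      exact Q.part_mem.2 hs
    · intro ht
      obtain ⟨x, hx⟩ := Q.nonempty_of_mem_parts ht
      have hs := Q.subset ht hx
      rw [← Q.part_eq_of_mem ht hx, ← hpart x hs]
      exact P.part_mem.2 hs
  subst hPQ
  congr 1
  ext ⟨t, ht⟩ : 1
  obtain ⟨x, hx⟩ := P.nonempty_of_mem_parts ht
  have hk := key x (P.subset ht hx)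
  simpa only [P.part_eq_of_mem ht hx] using hk

/-- The left side counts ordered set partitions; `|P|!` is at most the number
`n (n - 1) ⋯ (n - |P| + 1)` of injective labellings of the blocks of `P` by `Fin n`, `n = |s|`. -/
theorem sum_factorial_card_parts_le {α : Type*} [DecidableEq α] (s : Finset α) :
    ∑ P : Finpartition s, (P.parts.card)! ≤ s.card ^ s.card := by
  calc ∑ P : Finpartition s, (P.parts.card)!
      ≤ ∑ P : Finpartition s, Fintype.card ({t // t ∈ P.parts} ↪ Fin s.card) := by
        refine Finset.sum_le_sum fun P _ => ?_
        rw [Fintype.card_embedding_eq, Fintype.card_fin, Fintype.card_coe,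
          Nat.descFactorial_eq_factorial_mul_choose]
        exact Nat.le_mul_of_pos_right _ (Nat.choose_pos P.card_parts_le_card)
    _ = Fintype.card (Σ P : Finpartition s, {t // t ∈ P.parts} ↪ Fin s.card) :=
        Fintype.card_sigma.symm
    _ ≤ Fintype.card (s → Fin s.card) := Fintype.card_le_of_injective _ blockLabel_injective
    _ = s.card ^ s.card := by simp

/-- The `m`-th term of the series of `e ^ m` is at most its sum. -/
theorem pow_self_le_factorial_mul_exp (m : ℕ) :
    (m : ℝ) ^ m ≤ (m ! : ℝ) * Real.exp 1 ^ m := by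
  have h := Real.pow_div_factorial_le_exp (m : ℝ) (Nat.cast_nonneg m) m
  rw [div_le_iff₀ (by positivity)] at h
  rwa [← Real.exp_nat_mul, mul_one, mul_comm]

theorem sum_Icc_pow_le (m : ℕ) :
    ∑ k ∈ Finset.Icc 1 m, (k : ℝ) ^ (m - 1) ≤ (m : ℝ) ^ m := by
  rcases m with _ | m
  · simp
  · calc ∑ k ∈ Finset.Icc 1 (m + 1), (k : ℝ) ^ (m + 1 - 1)
        ≤ ∑ _k ∈ Finset.Icc 1 (m + 1), ((m + 1 : ℕ) : ℝ) ^ m := by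
          refine Finset.sum_le_sum fun k hk => ?_
          rw [Nat.add_sub_cancel]
          have := (Finset.mem_Icc.1 hk).2
          gcongr
      _ = ((m + 1 : ℕ) : ℝ) ^ (m + 1) := by
          simp [pow_succ, mul_comm]

/-- For a real `c ≥ 1`, `n ≥ 1`, and a finite set `s` with `|s| = n`,
`∑_{P partition of s} c^{|P|} (∑_{k=1}^{|P|} k^{|P|-1}) ≤ n! · e^{2n+1} · c^n`. -/
theorem sum_partitions_pow_estimate {α : Type*} [DecidableEq α]
    (c : ℝ) (hc : 1 ≤ c) (n : ℕ) (hn : 1 ≤ n) (s : Finset α)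
    (hs : s.card = n) :
    (∑ P : Finpartition s,
        c ^ P.parts.card *
          ∑ k ∈ Finset.Icc 1 P.parts.card, (k : ℝ) ^ (P.parts.card - 1)) ≤
      (n ! : ℝ) * Real.exp 1 ^ (2 * n + 1) * c ^ n := by
  have he : (1 : ℝ) ≤ Real.exp 1 := Real.one_le_exp zero_le_one
  have hc0 : 0 ≤ c := zero_le_one.trans hc
  have hsum : (∑ P : Finpartition s, ((P.parts.card)! : ℝ)) ≤ (n : ℝ) ^ n := by
    have := sum_factorial_card_parts_le s
    rw [hs] at this
    exact_mod_cast this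
  calc (∑ P : Finpartition s, c ^ P.parts.card *
          ∑ k ∈ Finset.Icc 1 P.parts.card, (k : ℝ) ^ (P.parts.card - 1))
      ≤ ∑ P : Finpartition s, c ^ n * (((P.parts.card)! : ℝ) * Real.exp 1 ^ n) := by
        refine Finset.sum_le_sum fun P _ => ?_
        have hP : P.parts.card ≤ n := hs ▸ P.card_parts_le_card
        have h := (sum_Icc_pow_le P.parts.card).trans
          (pow_self_le_factorial_mul_exp P.parts.card)
        refine mul_le_mul (pow_le_pow_right₀ hc hP) (h.trans ?_) (by positivity) (by positivity)
        gcongr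
    _ = c ^ n * ((∑ P : Finpartition s, ((P.parts.card)! : ℝ)) * Real.exp 1 ^ n) := by
        rw [← Finset.mul_sum, ← Finset.sum_mul]
    _ ≤ c ^ n * (((n ! : ℝ) * Real.exp 1 ^ n) * Real.exp 1 ^ n) := by
        gcongr
        exact hsum.trans (pow_self_le_factorial_mul_exp n)
    _ = (n ! : ℝ) * Real.exp 1 ^ (2 * n) * c ^ n := by ring
    _ ≤ (n ! : ℝ) * Real.exp 1 ^ (2 * n + 1) * c ^ n := by
        gcongr
        omega
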